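/- For every parameter h ∈ (1,2] and every natural number k ≥ 1, the tent map T_h has a periodic point of least period 2^k; that is, there exists x ∈ [0,1] with T_h^[2^k](x) = x and T_h^[m](x) ≠ x for all 1 ≤ m < 2^k. -/

import Mathlib

/-- The tent map with parameter `h`. -/
noncomputable def tentMap (h : ℝ) (x : ℝ) : ℝ :=
  if x ≤ 1 / 2 then h * x else h * (1 - x)

/-!
Renormalization. For `h > 1` the affine map `tentRenorm h` carries `[0, 1]`, reversing orientation,
onto `[1 / (h + 1), h / (h + 1)]`, whose right endpoint is the nonzero fixed point of `tentMap h`.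
It conjugates `tentMap (h ^ 2)` to the second iterate of `tentMap h`, while odd iterates of
`tentMap h` send the image interval to `[h / (h + 1), ∞)`, which meets it only in the fixed point,
the image of `0`. Hence it turns a nonzero periodic point of `tentMap (h ^ 2)` into one of
`tentMap h` with twice the period, and induction on `k`, for all `h > 1` at once, starts from that
fixed point. The parameters `h ^ (2 ^ k)` eventually exceed `2`, where `[0, 1]` is no longer
invariant, but periodic orbits never leave `[0, 1]`.
-/

open Function Set

variable {h x : ℝ}

theorem tentMap_eq_abs (h x : ℝ) : tentMap h x = h * (1 / 2 - |x - 1 / 2|) := by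
  unfold tentMap
  split_ifs with hx
  · rw [abs_of_nonpos (by linarith)]
    ring
  · rw [abs_of_nonneg (by linarith)]
    ring

theorem tentMap_of_half_le (hx : 1 / 2 ≤ x) : tentMap h x = h * (1 - x) := by
  rw [tentMap_eq_abs, abs_of_nonneg (sub_nonneg.2 hx)]
  ring

theorem iterate_tentMap_of_nonpos (hh : 0 ≤ h) (hx : x ≤ 0) (n : ℕ) :
    (tentMap h)^[n] x = h ^ n * x := by
  induction n with
  | zero => simp
  | succ n ih =>
    have hle : h ^ n * x ≤ 1 / 2 :=
      (mul_nonpos_of_nonneg_of_nonpos (pow_nonneg hh n) hx).trans (by norm_num)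
    rw [iterate_succ_apply', ih, tentMap, if_pos hle]
    ring

theorem nonneg_of_mem_periodicPts_tentMap (hh : 1 < h) (hx : x ∈ periodicPts (tentMap h)) :
    0 ≤ x := by
  obtain ⟨n, hn, hper⟩ := hx
  by_contra! hneg
  have hfix : h ^ n * x = x := by
    rw [← iterate_tentMap_of_nonpos (zero_le_one.trans hh.le) hneg.le]
    exact hper
  nlinarith [one_lt_pow₀ hh hn.ne']

theorem mem_Icc_of_mem_periodicPts_tentMap (hh : 1 < h) (hx : x ∈ periodicPts (tentMap h)) :
    x ∈ Icc (0 : ℝ) 1 := by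
  refine ⟨nonneg_of_mem_periodicPts_tentMap hh hx, ?_⟩
  by_contra! hlt
  have himage := nonneg_of_mem_periodicPts_tentMap hh ((bijOn_periodicPts _).mapsTo hx)
  rw [tentMap_of_half_le (by linarith)] at himage
  nlinarith

theorem iterate_tentMap_mem_Icc_of_mem_periodicPts (hh : 1 < h) (hx : x ∈ periodicPts (tentMap h))
    (n : ℕ) : (tentMap h)^[n] x ∈ Icc (0 : ℝ) 1 :=
  mem_Icc_of_mem_periodicPts_tentMap hh ((bijOn_periodicPts _).mapsTo.iterate n hx)

theorem half_le_div_add_one (hh : 1 ≤ h) : 1 / 2 ≤ h / (h + 1) := by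
  rw [div_le_div_iff₀] <;> linarith

theorem isFixedPt_tentMap_div_add_one (hh : 1 ≤ h) : IsFixedPt (tentMap h) (h / (h + 1)) := by
  rw [IsFixedPt, tentMap_of_half_le (half_le_div_add_one hh)]
  field_simp
  ring

/-- The renormalization map of the tent family: the affine map of `[0, 1]` onto
`[1 / (h + 1), h / (h + 1)]` that reverses orientation. It conjugates `tentMap (h ^ 2)` to the
second iterate of `tentMap h`. It is written relative to its fixed point `1 / 2`, the turning point
of every tent map. -/
noncomputable def tentRenorm (h x : ℝ) : ℝ :=
  1 / 2 - (h - 1) / (h + 1) * (x - 1 / 2)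

theorem tentRenorm_slope_nonneg (hh : 1 ≤ h) : 0 ≤ (h - 1) / (h + 1) :=
  div_nonneg (by linarith) (by linarith)

theorem tentRenorm_slope_pos (hh : 1 < h) : 0 < (h - 1) / (h + 1) :=
  div_pos (by linarith) (by linarith)

theorem tentRenorm_injective (hh : 1 < h) : Injective (tentRenorm h) := fun _ _ heq =>
  sub_left_injective (mul_left_cancel₀ (tentRenorm_slope_pos hh).ne' (sub_right_injective heq))

theorem tentRenorm_pos (hh : 1 ≤ h) (hx : x ≤ 1) : 0 < tentRenorm h x := by
  have hslope : (h - 1) / (h + 1) < 1 := by rw [div_lt_one] <;> linarith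
  have hscaled : (h - 1) / (h + 1) * (x - 1 / 2) ≤ (h - 1) / (h + 1) * (1 / 2) :=
    mul_le_mul_of_nonneg_left (by linarith) (tentRenorm_slope_nonneg hh)
  unfold tentRenorm
  linarith

theorem tentRenorm_lt_div_add_one (hh : 1 < h) (hx : 0 < x) : tentRenorm h x < h / (h + 1) := by
  have hgap : h / (h + 1) - tentRenorm h x = (h - 1) / (h + 1) * x := by
    unfold tentRenorm
    field_simp
    ring
  exact sub_pos.1 (hgap ▸ mul_pos (tentRenorm_slope_pos hh) hx)

theorem tentMap_tentRenorm (hh : 1 ≤ h) (x : ℝ) :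
    tentMap h (tentRenorm h x) = h * (1 / 2 - (h - 1) / (h + 1) * |x - 1 / 2|) := by
  rw [tentMap_eq_abs, tentRenorm, sub_sub_cancel_left, abs_neg, abs_mul,
    abs_of_nonneg (tentRenorm_slope_nonneg hh)]

theorem div_add_one_le_tentMap_tentRenorm (hh : 1 ≤ h) (hx : x ∈ Icc (0 : ℝ) 1) :
    h / (h + 1) ≤ tentMap h (tentRenorm h x) := by
  have hdist : |x - 1 / 2| ≤ 1 / 2 := abs_le.2 ⟨by linarith [hx.1], by linarith [hx.2]⟩
  calc
    h / (h + 1) = h * (1 / 2 - (h - 1) / (h + 1) * (1 / 2)) := by field_simp; ring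
    _ ≤ h * (1 / 2 - (h - 1) / (h + 1) * |x - 1 / 2|) := by gcongr
    _ = tentMap h (tentRenorm h x) := (tentMap_tentRenorm hh x).symm

theorem tentMap_tentMap_tentRenorm (hh : 1 ≤ h) (hx : x ∈ Icc (0 : ℝ) 1) :
    tentMap h (tentMap h (tentRenorm h x)) = tentRenorm h (tentMap (h ^ 2) x) := by
  have hright : 1 / 2 ≤ tentMap h (tentRenorm h x) :=
    (half_le_div_add_one hh).trans (div_add_one_le_tentMap_tentRenorm hh hx)
  rw [tentMap_of_half_le hright, tentMap_tentRenorm hh, tentRenorm, tentMap_eq_abs]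
  field_simp
  ring

theorem iterate_two_mul_tentRenorm (hh : 1 < h) (hx : x ∈ periodicPts (tentMap (h ^ 2))) (n : ℕ) :
    (tentMap h)^[2 * n] (tentRenorm h x) = tentRenorm h ((tentMap (h ^ 2))^[n] x) := by
  induction n with
  | zero => rfl
  | succ n ih =>
    have horbit : (tentMap (h ^ 2))^[n] x ∈ Icc (0 : ℝ) 1 :=
      iterate_tentMap_mem_Icc_of_mem_periodicPts (one_lt_pow₀ hh two_ne_zero) hx n
    rw [mul_add_one, iterate_succ_apply', iterate_succ_apply', ih,
      tentMap_tentMap_tentRenorm hh.le horbit, iterate_succ_apply']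

theorem even_minimalPeriod_tentRenorm (hh : 1 < h) (hx : x ∈ periodicPts (tentMap (h ^ 2)))
    (hx0 : x ≠ 0) : Even (minimalPeriod (tentMap h) (tentRenorm h x)) := by
  have hh2 : 1 < h ^ 2 := one_lt_pow₀ hh two_ne_zero
  by_contra hodd
  obtain ⟨n, hn⟩ := Nat.not_even_iff_odd.1 hodd
  have horbit : (tentMap (h ^ 2))^[n] x ∈ Icc (0 : ℝ) 1 :=
    iterate_tentMap_mem_Icc_of_mem_periodicPts hh2 hx n
  have hreturn : tentMap h (tentRenorm h ((tentMap (h ^ 2))^[n] x)) = tentRenorm h x := by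
    rw [← iterate_two_mul_tentRenorm hh hx, ← iterate_succ_apply' (tentMap h), Nat.succ_eq_add_one,
      ← hn, iterate_minimalPeriod]
  have hpos : 0 < x := (nonneg_of_mem_periodicPts_tentMap hh2 hx).lt_of_ne' hx0
  exact (tentRenorm_lt_div_add_one hh hpos).not_ge
    (hreturn ▸ div_add_one_le_tentMap_tentRenorm hh.le horbit)

theorem minimalPeriod_tentRenorm (hh : 1 < h) (hx : x ∈ periodicPts (tentMap (h ^ 2)))
    (hx0 : x ≠ 0) :
    minimalPeriod (tentMap h) (tentRenorm h x) = 2 * minimalPeriod (tentMap (h ^ 2)) x := by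
  have hiterate : minimalPeriod (tentMap h)^[2] (tentRenorm h x) =
      minimalPeriod (tentMap (h ^ 2)) x := by
    refine minimalPeriod_eq_minimalPeriod_iff.2 fun n => ?_
    rw [IsPeriodicPt, IsFixedPt, ← iterate_mul, iterate_two_mul_tentRenorm hh hx,
      (tentRenorm_injective hh).eq_iff]
    exact Iff.rfl
  have heven := (even_minimalPeriod_tentRenorm hh hx hx0).two_dvd
  rw [← hiterate, minimalPeriod_iterate_eq_div_gcd two_ne_zero, Nat.gcd_eq_right heven,
    Nat.mul_div_cancel' heven]

theorem exists_minimalPeriod_tentMap_eq_two_pow (hh : 1 < h) (k : ℕ) :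
    ∃ x ≠ 0, minimalPeriod (tentMap h) x = 2 ^ k := by
  induction k generalizing h with
  | zero =>
    exact ⟨h / (h + 1), (div_pos (by linarith) (by linarith)).ne',
      minimalPeriod_eq_one_iff_isFixedPt.2 (isFixedPt_tentMap_div_add_one hh.le)⟩
  | succ k ih =>
    have hh2 : 1 < h ^ 2 := one_lt_pow₀ hh two_ne_zero
    obtain ⟨x, hx0, hmin⟩ := ih hh2
    have hper : x ∈ periodicPts (tentMap (h ^ 2)) :=
      minimalPeriod_pos_iff_mem_periodicPts.1 (hmin ▸ Nat.two_pow_pos k)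
    have hle : x ≤ 1 := (mem_Icc_of_mem_periodicPts_tentMap hh2 hper).2
    exact ⟨tentRenorm h x, (tentRenorm_pos hh.le hle).ne',
      by rw [minimalPeriod_tentRenorm hh hper hx0, hmin, pow_succ']⟩

theorem tent_has_period_two_pow_general (hh : 1 < h) (k : ℕ) :
    ∃ x ∈ Icc (0 : ℝ) 1, (tentMap h)^[2 ^ k] x = x ∧
      ∀ m : ℕ, 1 ≤ m → m < 2 ^ k → (tentMap h)^[m] x ≠ x := by
  obtain ⟨x, -, hmin⟩ := exists_minimalPeriod_tentMap_eq_two_pow hh k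
  have hper : x ∈ periodicPts (tentMap h) :=
    minimalPeriod_pos_iff_mem_periodicPts.1 (hmin ▸ Nat.two_pow_pos k)
  refine ⟨x, mem_Icc_of_mem_periodicPts_tentMap hh hper, ?_, fun m hm hlt => ?_⟩
  · rw [← hmin, iterate_minimalPeriod]
  · exact not_isPeriodicPt_of_pos_of_lt_minimalPeriod (Nat.one_le_iff_ne_zero.1 hm) (hmin ▸ hlt)

theorem tent_has_period_two_pow (h : ℝ) (hh : h ∈ Set.Ioc (1 : ℝ) 2)
    (k : ℕ) (hk : 1 ≤ k) :
    ∃ x ∈ Set.Icc (0 : ℝ) 1, (tentMap h)^[2 ^ k] x = x ∧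
      ∀ m : ℕ, 1 ≤ m → m < 2 ^ k → (tentMap h)^[m] x ≠ x :=
  tent_has_period_two_pow_general hh.1 k
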